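/- (Consistency-around-a-face-centered-cube for the pair (A3_{(0)}, C3_{(0;0;0)}).) There exists a nonzero polynomial p in twelve variables with complex coefficients such that: for all nonzero α1,α2,β1,β2,γ1,γ2 ∈ ℂ and all x, xa, xb, xc, zn, zw ∈ ℂ with p(α1,α2,β1,β2,γ1,γ2,x,xa,xb,xc,zn,zw) ≠ 0, there exist xd, y, ya, yb, yc, yd, ze, zs ∈ ℂ satisfying all fourteen equations of the CAFCC system for the pair (A, C) := (A3_{(0)}, C3_{(0;0;0)}) with parameters (α1,α2),(β1,β2),(γ1,γ2). In other words, the overdetermined system of fourteen face-centered quad equations on the face-centered cube is consistent: generic initial data x, xa, xb, xc, zn, zw admits a completion solving all fourteen equations. -/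

import Mathlib

noncomputable section

open Matrix Complex

/-- The type-A face-centered quad polynomial `A3_{(δ)}`. -/
noncomputable def A3 (d x xa xb xc xd a1 a2 b1 b2 : ℂ) : ℂ :=
  d/4*(a1/a2-a2/a1)*(b1/b2-b2/b1)*(b1*b2/(a1*a2)-a1*a2/(b1*b2))*x
  + ((b1/b2-b2/b1)*(xa*xb-xc*xd) + (a1/a2-a2/a1)*(xa*xc-xb*xd)
      - (a1*a2/(b1*b2)-b1*b2/(a1*a2))*(xa*xd-xb*xc))*x
  + (a2/b1-b1/a2)*(xa*x^2-xb*xc*xd) - (a2/b2-b2/a2)*(xb*x^2-xa*xc*xd)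
  - (a1/b1-b1/a1)*(xc*x^2-xa*xb*xd) + (a1/b2-b2/a1)*(xd*x^2-xa*xb*xc)
  + d/4*((a1/b1-b1/a1)*(a2/b2-b2/a2)*((a1/b2-b2/a1)*xa+(a2/b1-b1/a2)*xd)
      - (a1/b2-b2/a1)*(a2/b1-b1/a2)*((a1/b1-b1/a1)*xb+(a2/b2-b2/a2)*xc))

/-- The type-C face-centered quad polynomial `C3_{(δ1;δ2;δ3)}`. -/
noncomputable def C3 (d1 d2 d3 x xa xb xc xd a1 a2 b1 b2 : ℂ) : ℂ :=
  (a2*(b1*xd-b2*xc) - d3*(a2^2*(b1*xb-b2*xa)+b1*b2*(b1*xa-b2*xb))/a1)*x^2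
  + a2*xa*xb*(b2*xd-b1*xc)
  + d1*a1*(b1*xb-b2*xa+a2^2*(xa/b2-xb/b1))
  + (a2^2*(xb*xc-xa*xd) + b1*b2*(xa*xc-xb*xd)
      + a2*(b2/b1-b1/b2)*(d1*a1 - d3*(b1*b2/a1)*xa*xb + d2*(b1*b2/a1)*xc*xd))*x
  + d2*((a2^2-b1^2)*(a2^2-b2^2)/(2*a2*b1*b2)*(b2*xd-b1*xc)
      + (xc*xd/a1)*(b1*b2*(b1*xb-b2*xa)+a2^2*(b1*xa-b2*xb)))

/-- The permutation matrix `P`. -/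
noncomputable def Pm : Matrix (Fin 2) (Fin 2) ℂ := !![0, 1; 1, 0]

/-- The matrix `M(u,v)` from the type-A Lax matrix of `A3_{(0)}`. -/
noncomputable def Mm (p1 p2 q1 q2 u v : ℂ) : Matrix (Fin 2) (Fin 2) ℂ :=
  (4:ℂ) • !![q1/p1-p1/q1, (p2/q1-q1/p2)*u+(q2/p2-p2/q2)*v; 0, q2/p1-p1/q2]

/-- The unnormalized type-A Lax matrix of `A3_{(0)}`. -/
noncomputable def NA3 (x xa xb p1 p2 q1 q2 : ℂ) : Matrix (Fin 2) (Fin 2) ℂ :=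
  x^2 • Mm p1 p2 q1 q2 xa xb
  + x • ((4:ℂ) • !![(p1/p2-p2/p1)*xa+(p1*p2/(q1*q2)-q1*q2/(p1*p2))*xb, (q1/q2-q2/q1)*xa*xb;
        q1/q2-q2/q1, (p1*p2/(q1*q2)-q1*q2/(p1*p2))*xa+(p1/p2-p2/p1)*xb])
  + (xa*xb) • (Pm * Mm p1 p2 q1 q2 (1/xa) (1/xb) * Pm)

/-- The normalization factor `D_LA` for the type-A Lax matrix of `A3_{(0)}`. -/
noncomputable def DA3 (x xa xb p1 p2 q1 q2 : ℂ) : ℂ :=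
  4*Complex.I*(p1^2-q1^2)*(q1*xa-p2*x)*(q2*x-p2*xb)/(p1*p2*q1*q2)

/-- The (normalized) type-A Lax matrix of `A3_{(0)}`. -/
noncomputable def laxA3 (x xa xb p1 p2 q1 q2 : ℂ) : Matrix (Fin 2) (Fin 2) ℂ :=
  (DA3 x xa xb p1 p2 q1 q2)⁻¹ • NA3 x xa xb p1 p2 q1 q2

/-- The type-C Lax matrix of `C3_{(δ1;δ2;δ3)}`. -/
noncomputable def laxC3 (d1 d2 d3 x xb xd p1 p2 q1 q2 : ℂ) : Matrix (Fin 2) (Fin 2) ℂ :=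
  p2 • (x^2 • (!![-q2, q1*xd; 0, 0]
        + d1 • ((2*d3*q1*q2/p1) • !![0, (q2/p2-p2/q2)*xb; 0, q1/p2-p2/q1]))
    + x • (!![p2*xb, -((q1*q2/p2)*xb*xd); -(q1*q2/p2), p2*xd]
        + d1 • (((2*q1*q2/p1)*(q2/q1-q1/q2)) • !![d2*xd, p1^2/(2*q1*q2); 0, d3*xb]))
    + (!![0, 0; q1*xb, -(q2*xb*xd)]
        + d1 • !![d2*q1*(q1/p2-p2/q1)*(p2/q2-q2/p2+2*(q2/p1)*xb*xd),
                   (q1/p2-p2/q1)*(p1*xb-d2*(p2/q2-q2/p2)*q2*xd);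
                   2*d2*(q2/p2-p2/q2)*(q1*q2/p1)*xd, p1*(q2/p2-p2/q2)]))

/-- Lattice modified KdV quad equation on a face `e, u, v, w` with parameters `p, q`. -/
def Q (e u v w p q : ℂ) : Prop := e * (q * u - p * v) = w * (p * u - q * v)

/-- Leg relation at centre `c` with opposite vertex `o`. -/
def Lg (c o p q m n : ℂ) : Prop := (q * c - p * o) * m = (p * c - q * o) * n

theorem Q.symm {e u v w p q : ℂ} (h : Q e u v w p q) : Q e v u w q p := by
  unfold Q at *; linear_combination -h

theorem neg_ne {p u q v : ℂ} (h : p * u - q * v ≠ 0) : q * v - p * u ≠ 0 := by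
  intro hz; apply h; linear_combination -hz

/-- Three-dimensional consistency of the quad equation. -/
theorem cube {e u v w uv uw vw z p q r : ℂ}
    (h1 : Q e u v uv p q) (h2 : Q e u w uw p r) (h3 : Q e v w vw q r)
    (h4 : Q u uv uw z q r)
    (n1 : p * u - q * v ≠ 0) (n2 : p * u - r * w ≠ 0) (n3 : q * v - r * w ≠ 0)
    (n4 : q * uv - r * uw ≠ 0) :
    Q v uv vw z p r ∧ Q w uw vw z p q := by
  unfold Q at *
  have e1 : uv = e * (q * u - p * v) / (p * u - q * v) := by
    rw [eq_div_iff n1]; exact h1.symm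
  have e2 : uw = e * (r * u - p * w) / (p * u - r * w) := by
    rw [eq_div_iff n2]; exact h2.symm
  have e3 : vw = e * (r * v - q * w) / (q * v - r * w) := by
    rw [eq_div_iff n3]; exact h3.symm
  have e4 : z = u * (r * uv - q * uw) / (q * uv - r * uw) := by
    rw [eq_div_iff n4]; exact h4.symm
  constructor
  · apply mul_right_cancel₀ n4
    have : z * (p * uv - r * vw) * (q * uv - r * uw)
      = u * (r * uv - q * uw) * (p * uv - r * vw) := by linear_combination -(p * uv - r * vw) * h4
    have aux : v * (r * (e * (q * u - p * v) / (p * u - q * v)) - p * (e * (r * v - q * w) / (q * v - r * w))) * (q * (e * (q * u - p * v) / (p * u - q * v)) - r * (e * (r * u - p * w) / (p * u - r * w))) = u * (r * (e * (q * u - p * v) / (p * u - q * v)) - q * (e * (r * u - p * w) / (p * u - r * w))) * (p * (e * (q * u - p * v) / (p * u - q * v)) - r * (e * (r * v - q * w) / (q * v - r * w))) := by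
      generalize hA : p * u - q * v = A at *
      generalize hB : p * u - r * w = B at *
      generalize hC : q * v - r * w = C at *
      field_simp
      subst hA hB hC
      ring
    rw [this, e1, e2, e3]
    exact aux
  · apply mul_right_cancel₀ n4
    have : z * (p * uw - q * vw) * (q * uv - r * uw)
      = u * (r * uv - q * uw) * (p * uw - q * vw) := by linear_combination -(p * uw - q * vw) * h4
    have aux : w * (q * (e * (r * u - p * w) / (p * u - r * w)) - p * (e * (r * v - q * w) / (q * v - r * w))) * (q * (e * (q * u - p * v) / (p * u - q * v)) - r * (e * (r * u - p * w) / (p * u - r * w))) = u * (r * (e * (q * u - p * v) / (p * u - q * v)) - q * (e * (r * u - p * w) / (p * u - r * w))) * (p * (e * (r * u - p * w) / (p * u - r * w)) - q * (e * (r * v - q * w) / (q * v - r * w))) := by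
      generalize hA : p * u - q * v = A at *
      generalize hB : p * u - r * w = B at *
      generalize hC : q * v - r * w = C at *
      field_simp
      subst hA hB hC
      ring
    rw [this, e1, e2, e3]
    exact aux

theorem C_of {x xa xb xc xd a1 a b1 b2 n : ℂ} (hn : n ≠ 0)
    (h1 : Lg x xa a b1 n xc) (h2 : Lg x xb a b2 n xd) :
    C3 0 0 0 x xa xb xc xd a1 a b1 b2 = 0 := by
  unfold Lg at *
  apply mul_right_cancel₀ hn
  unfold C3
  linear_combination (a * x - b2 * xb) * xd * h1 - (a * x - b1 * xa) * xc * h2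

theorem A_of {x xa xb xc xd a1 a2 b1 b2 n1 n2 m1 m2 : ℂ}
    (ha1 : a1 ≠ 0) (ha2 : a2 ≠ 0) (hb1 : b1 ≠ 0) (hb2 : b2 ≠ 0) (hx : x ≠ 0)
    (hn1 : n1 ≠ 0) (hn2 : n2 ≠ 0) (hm1 : m1 ≠ 0) (hm2 : m2 ≠ 0)
    (h1 : Lg x xa a2 b1 n2 m1) (h2 : Lg x xb a2 b2 n2 m2)
    (h3 : Lg x xc a1 b1 n1 m1) (h4 : Lg x xd a1 b2 n1 m2) :
    A3 0 x xa xb xc xd a1 a2 b1 b2 = 0 := by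
  unfold Lg at *
  have key : (b1 * x - a2 * xa) * (a2 * x - b2 * xb) * (a1 * x - b1 * xc) * (b2 * x - a1 * xd)
      = (a2 * x - b1 * xa) * (b2 * x - a2 * xb) * (b1 * x - a1 * xc) * (a1 * x - b2 * xd) := by
    apply mul_right_cancel₀ (mul_ne_zero (mul_ne_zero hn1 hn2) (mul_ne_zero hm1 hm2))
    calc _ = ((b1 * x - a2 * xa) * n2) * ((a2 * x - b2 * xb) * m2)
          * ((a1 * x - b1 * xc) * m1) * ((b2 * x - a1 * xd) * n1) := by ring
      _ = _ := by rw [h1, ← h2, ← h3, h4]; ring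
  have e : A3 0 x xa xb xc xd a1 a2 b1 b2 * (-x * (a1 * a2 * b1 * b2))
      = (b1 * x - a2 * xa) * (a2 * x - b2 * xb) * (a1 * x - b1 * xc) * (b2 * x - a1 * xd)
      - (a2 * x - b1 * xa) * (b2 * x - a2 * xb) * (b1 * x - a1 * xc) * (a1 * x - b2 * xd) := by
    unfold A3
    field_simp
    ring
  have h0 : -x * (a1 * a2 * b1 * b2) ≠ 0 := by simp [ha1, ha2, hb1, hb2, hx]
  apply mul_right_cancel₀ h0
  rw [e, key]; ring

theorem core {a1 a2 b1 b2 g1 g2 x xa xb xc zn zw : ℂ}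
    {vb vh vg vag vbh vgh vabg vagh vbgh vabh vabd vbdg vbdh vabgh vbdgh vabdh vabdg vabdgh : ℂ}
    (ha2 : a2 ≠ 0) (hb1 : b1 ≠ 0) (hb2 : b2 ≠ 0) (hg1 : g1 ≠ 0) (hg2 : g2 ≠ 0)
    (h__ab : Q xa xc vb x a2 b1)
    (h__ah : Q xa xc vh zw a2 g2)
    (h__bg : Q xa vb vg zn b1 g1)
    (h__ag : Q xa xc vg vag a2 g1)
    (h__bh : Q xa vb vh vbh b1 g2)
    (h__gh : Q xa vg vh vgh g1 g2)
    (h_b_ag : Q vb x zn vabg a2 g1)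
    (h_a_gh : Q xc vag zw vagh g1 g2)
    (h_b_gh : Q vb zn vbh vbgh g1 g2)
    (h_b_ah : Q vb x vbh vabh a2 g2)
    (h_b_ad : Q vb x xb vabd a2 b2)
    (h_b_dg : Q vb xb zn vbdg b2 g1)
    (h_b_dh : Q vb xb vbh vbdh b2 g2)
    (h_bg_ah : Q zn vabg vbgh vabgh a2 g2)
    (h_bg_dh : Q zn vbdg vbgh vbdgh b2 g2)
    (h_bd_ah : Q xb vabd vbdh vabdh a2 g2)
    (h_bg_ad : Q zn vabg vbdg vabdg a2 b2)
    (h_bgh_ad : Q vbgh vabgh vbdgh vabdgh a2 b2)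
    (n__ab : a2 * xc - b1 * vb ≠ 0)
    (n__ag : a2 * xc - g1 * vg ≠ 0)
    (n__ah : a2 * xc - g2 * vh ≠ 0)
    (n__bg : b1 * vb - g1 * vg ≠ 0)
    (n__bh : b1 * vb - g2 * vh ≠ 0)
    (n__gh : g1 * vg - g2 * vh ≠ 0)
    (n_a_gh : g1 * vag - g2 * zw ≠ 0)
    (n_b_ad : a2 * x - b2 * xb ≠ 0)
    (n_b_ag : a2 * x - g1 * zn ≠ 0)
    (n_b_ah : a2 * x - g2 * vbh ≠ 0)
    (n_b_dg : b2 * xb - g1 * zn ≠ 0)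
    (n_b_dh : b2 * xb - g2 * vbh ≠ 0)
    (n_b_gh : g1 * zn - g2 * vbh ≠ 0)
    (n_g_ab : a2 * vag - b1 * zn ≠ 0)
    (n_g_ah : a2 * vag - g2 * vgh ≠ 0)
    (n_g_bh : b1 * zn - g2 * vgh ≠ 0)
    (n_bd_ag : a2 * vabd - g1 * vbdg ≠ 0)
    (n_bd_ah : a2 * vabd - g2 * vbdh ≠ 0)
    (n_bd_gh : g1 * vbdg - g2 * vbdh ≠ 0)
    (n_bg_ad : a2 * vabg - b2 * vbdg ≠ 0)
    (n_bg_ah : a2 * vabg - g2 * vbgh ≠ 0)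
    (n_bg_dh : b2 * vbdg - g2 * vbgh ≠ 0)
    (n_bdg_ah : a2 * vabdg - g2 * vbdgh ≠ 0)
    (n_bgh_ad : a2 * vabgh - b2 * vbdgh ≠ 0)
    (z_ : xa ≠ 0)
    (z_a : xc ≠ 0)
    (z_b : vb ≠ 0)
    (z_g : vg ≠ 0)
    (z_h : vh ≠ 0)
    (z_ab : x ≠ 0)
    (z_ag : vag ≠ 0)
    (z_bd : xb ≠ 0)
    (z_bg : zn ≠ 0)
    (z_gh : vgh ≠ 0)
    (z_abd : vabd ≠ 0)
    (z_abg : vabg ≠ 0)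
    (z_agh : vagh ≠ 0)
    (z_bdg : vbdg ≠ 0)
    (z_bdh : vbdh ≠ 0)
    (z_bgh : vbgh ≠ 0)
    (z_abdg : vabdg ≠ 0)
    (z_abgh : vabgh ≠ 0)
    (z_bdgh : vbdgh ≠ 0)
    (z_abdgh : vabdgh ≠ 0) :
    C3 0 0 0 x xa xb xc vabd a1 a2 b1 b2 = 0 ∧
    C3 0 0 0 zw vgh xa vagh xc a1 a2 g1 g2 = 0 ∧
    A3 0 zn vgh vbdgh xa xb g1 g2 b1 b2 = 0 ∧
    C3 0 0 0 vabgh vgh vbdgh vagh vabdgh a1 a2 b1 b2 = 0 ∧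
    C3 0 0 0 vabdh vbdgh xb vabdgh vabd a1 a2 g1 g2 = 0 ∧
    A3 0 vabg vagh vabdgh xc vabd g1 g2 b1 b2 = 0 ∧
    A3 0 xa zw vgh x zn b1 g2 a2 g1 = 0 ∧
    A3 0 xb vabdh vbdgh x zn b2 g2 a2 g1 = 0 ∧
    C3 0 0 0 xc vabg vagh x zw a1 g1 b1 g2 = 0 ∧
    C3 0 0 0 vabd vabdgh vabg vabdh x a1 g1 g2 b2 = 0 ∧
    A3 0 vgh zw xa vabgh zn b1 g1 a2 g2 = 0 ∧
    A3 0 vbdgh vabdh xb vabgh zn b2 g1 a2 g2 = 0 ∧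
    C3 0 0 0 vagh xc vabg zw vabgh a1 g2 g1 b1 = 0 ∧
    C3 0 0 0 vabdgh vabd vabg vabdh vabgh a1 g2 g1 b2 = 0 := by
  obtain ⟨k1, k2⟩ := cube h__ab.symm h__bg h__ag h_b_ag
    (neg_ne n__ab) n__bg n__ag n_b_ag
  have h_a_bg : Q xc x vag vabg b1 g1 := k1
  have h_g_ab : Q vg vag zn vabg a2 b1 := k2.symm
  obtain ⟨k1, k2⟩ := cube h__ag h__ah h__gh h_a_gh
    n__ag n__ah n__gh n_a_gh
  have h_g_ah : Q vg vag vgh vagh a2 g2 := k1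
  have h_h_ag : Q vh zw vgh vagh a2 g1 := k2
  obtain ⟨k1, k2⟩ := cube h__bg h__bh h__gh h_b_gh
    n__bg n__bh n__gh n_b_gh
  have h_g_bh : Q vg zn vgh vbgh b1 g2 := k1
  have h_h_bg : Q vh vbh vgh vbgh b1 g1 := k2
  obtain ⟨k1, k2⟩ := cube h__ab.symm h__bh h__ah h_b_ah
    (neg_ne n__ab) n__bh n__ah n_b_ah
  have h_a_bh : Q xc x zw vabh b1 g2 := k1
  have h_h_ab : Q vh zw vbh vabh a2 b1 := k2.symm
  obtain ⟨k1, k2⟩ := cube h_g_ab.symm h_g_bh h_g_ah h_bg_ah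
    (neg_ne n_g_ab) n_g_bh n_g_ah n_bg_ah
  have h_ag_bh : Q vag vabg vagh vabgh b1 g2 := k1
  have h_gh_ab : Q vgh vagh vbgh vabgh a2 b1 := k2.symm
  obtain ⟨k1, k2⟩ := cube h_b_dg.symm h_b_gh h_b_dh h_bg_dh
    (neg_ne n_b_dg) n_b_gh n_b_dh n_bg_dh
  have h_bd_gh : Q xb vbdg vbdh vbdgh g1 g2 := k1
  have h_bh_dg : Q vbh vbdh vbgh vbdgh b2 g1 := k2.symm
  obtain ⟨k1, k2⟩ := cube h_b_ag.symm h_b_dg.symm h_b_ad h_bg_ad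
    (neg_ne n_b_ag) (neg_ne n_b_dg) n_b_ad n_bg_ad
  have h_ab_dg : Q x vabd vabg vabdg b2 g1 := k1.symm
  have h_bd_ag : Q xb vabd vbdg vabdg a2 g1 := k2.symm
  obtain ⟨k1, k2⟩ := cube h_b_ag.symm h_b_gh h_b_ah h_bg_ah
    (neg_ne n_b_ag) n_b_gh n_b_ah n_bg_ah
  have h_ab_gh : Q x vabg vabh vabgh g1 g2 := k1
  have h_bh_ag : Q vbh vabh vbgh vabgh a2 g1 := k2.symm
  obtain ⟨k1, k2⟩ := cube h_b_ad.symm h_b_dh h_b_ah h_bd_ah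
    (neg_ne n_b_ad) n_b_dh n_b_ah n_bd_ah
  have h_ab_dh : Q x vabd vabh vabdh b2 g2 := k1
  have h_bh_ad : Q vbh vabh vbdh vabdh a2 b2 := k2.symm
  obtain ⟨k1, k2⟩ := cube h_bg_ah.symm h_bg_dh.symm h_bg_ad h_bgh_ad
    (neg_ne n_bg_ah) (neg_ne n_bg_dh) n_bg_ad n_bgh_ad
  have h_abg_dh : Q vabg vabdg vabgh vabdgh b2 g2 := k1.symm
  have h_bdg_ah : Q vbdg vabdg vbdgh vabdgh a2 g2 := k2.symm
  obtain ⟨k1, k2⟩ := cube h_bd_ag.symm h_bd_gh h_bd_ah h_bdg_ah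
    (neg_ne n_bd_ag) n_bd_gh n_bd_ah n_bdg_ah
  have h_abd_gh : Q vabd vabdg vabdh vabdgh g1 g2 := k1
  have h_bdh_ag : Q vbdh vabdh vbdgh vabdgh a2 g1 := k2.symm
  refine ⟨C_of z_b (n := vb) (by unfold Lg; unfold Q at h__ab; first | linear_combination h__ab | linear_combination -h__ab)
      (by unfold Lg; unfold Q at h_b_ad; first | linear_combination h_b_ad | linear_combination -h_b_ad),
    C_of z_h (n := vh) (by unfold Lg; unfold Q at h_h_ag; first | linear_combination h_h_ag | linear_combination -h_h_ag)
      (by unfold Lg; unfold Q at h__ah; first | linear_combination h__ah | linear_combination -h__ah),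
    A_of hg1 hg2 hb1 hb2 z_bg z_b z_bgh z_g z_bdg
      (by unfold Lg; unfold Q at h_g_bh; first | linear_combination h_g_bh | linear_combination -h_g_bh)
      (by unfold Lg; unfold Q at h_bg_dh; first | linear_combination h_bg_dh | linear_combination -h_bg_dh)
      (by unfold Lg; unfold Q at h__bg; first | linear_combination h__bg | linear_combination -h__bg)
      (by unfold Lg; unfold Q at h_b_dg; first | linear_combination h_b_dg | linear_combination -h_b_dg),
    C_of z_bgh (n := vbgh) (by unfold Lg; unfold Q at h_gh_ab; first | linear_combination h_gh_ab | linear_combination -h_gh_ab)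
      (by unfold Lg; unfold Q at h_bgh_ad; first | linear_combination h_bgh_ad | linear_combination -h_bgh_ad),
    C_of z_bdh (n := vbdh) (by unfold Lg; unfold Q at h_bdh_ag; first | linear_combination h_bdh_ag | linear_combination -h_bdh_ag)
      (by unfold Lg; unfold Q at h_bd_ah; first | linear_combination h_bd_ah | linear_combination -h_bd_ah),
    A_of hg1 hg2 hb1 hb2 z_abg z_ab z_abgh z_ag z_abdg
      (by unfold Lg; unfold Q at h_ag_bh; first | linear_combination h_ag_bh | linear_combination -h_ag_bh)
      (by unfold Lg; unfold Q at h_abg_dh; first | linear_combination h_abg_dh | linear_combination -h_abg_dh)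
      (by unfold Lg; unfold Q at h_a_bg; first | linear_combination h_a_bg | linear_combination -h_a_bg)
      (by unfold Lg; unfold Q at h_ab_dg; first | linear_combination h_ab_dg | linear_combination -h_ab_dg),
    A_of hb1 hg2 ha2 hg1 z_ z_b z_h z_a z_g
      (by unfold Lg; unfold Q at h__ah; first | linear_combination h__ah | linear_combination -h__ah)
      (by unfold Lg; unfold Q at h__gh; first | linear_combination h__gh | linear_combination -h__gh)
      (by unfold Lg; unfold Q at h__ab; first | linear_combination h__ab | linear_combination -h__ab)
      (by unfold Lg; unfold Q at h__bg; first | linear_combination h__bg | linear_combination -h__bg),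
    A_of hb2 hg2 ha2 hg1 z_bd z_b z_bdh z_abd z_bdg
      (by unfold Lg; unfold Q at h_bd_ah; first | linear_combination h_bd_ah | linear_combination -h_bd_ah)
      (by unfold Lg; unfold Q at h_bd_gh; first | linear_combination h_bd_gh | linear_combination -h_bd_gh)
      (by unfold Lg; unfold Q at h_b_ad; first | linear_combination h_b_ad | linear_combination -h_b_ad)
      (by unfold Lg; unfold Q at h_b_dg; first | linear_combination h_b_dg | linear_combination -h_b_dg),
    C_of z_ag (n := vag) (by unfold Lg; unfold Q at h_a_bg; first | linear_combination h_a_bg | linear_combination -h_a_bg)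
      (by unfold Lg; unfold Q at h_a_gh; first | linear_combination h_a_gh | linear_combination -h_a_gh),
    C_of z_abdg (n := vabdg) (by unfold Lg; unfold Q at h_abd_gh; first | linear_combination h_abd_gh | linear_combination -h_abd_gh)
      (by unfold Lg; unfold Q at h_ab_dg; first | linear_combination h_ab_dg | linear_combination -h_ab_dg),
    A_of hb1 hg1 ha2 hg2 z_gh z_bgh z_h z_agh z_g
      (by unfold Lg; unfold Q at h_h_ag; first | linear_combination h_h_ag | linear_combination -h_h_ag)
      (by unfold Lg; unfold Q at h__gh; first | linear_combination h__gh | linear_combination -h__gh)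
      (by unfold Lg; unfold Q at h_gh_ab; first | linear_combination h_gh_ab | linear_combination -h_gh_ab)
      (by unfold Lg; unfold Q at h_g_bh; first | linear_combination h_g_bh | linear_combination -h_g_bh),
    A_of hb2 hg1 ha2 hg2 z_bdgh z_bgh z_bdh z_abdgh z_bdg
      (by unfold Lg; unfold Q at h_bdh_ag; first | linear_combination h_bdh_ag | linear_combination -h_bdh_ag)
      (by unfold Lg; unfold Q at h_bd_gh; first | linear_combination h_bd_gh | linear_combination -h_bd_gh)
      (by unfold Lg; unfold Q at h_bgh_ad; first | linear_combination h_bgh_ad | linear_combination -h_bgh_ad)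
      (by unfold Lg; unfold Q at h_bg_dh; first | linear_combination h_bg_dh | linear_combination -h_bg_dh),
    C_of z_ag (n := vag) (by unfold Lg; unfold Q at h_a_gh; first | linear_combination h_a_gh | linear_combination -h_a_gh)
      (by unfold Lg; unfold Q at h_ag_bh; first | linear_combination h_ag_bh | linear_combination -h_ag_bh),
    C_of z_abdg (n := vabdg) (by unfold Lg; unfold Q at h_abd_gh; first | linear_combination h_abd_gh | linear_combination -h_abd_gh)
      (by unfold Lg; unfold Q at h_abg_dh; first | linear_combination h_abg_dh | linear_combination -h_abg_dh)⟩

/-- A base point at which all relevant quantities are finite and nonzero. -/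
def base : Fin 12 → ℂ := ![1, -1, 5, 3, 4, -2, 2, 2, 2, 1, -2, -2]

abbrev Fn := (Fin 12 → ℂ) → ℂ

/-- `P` holds off a hypersurface that misses the base point. -/
def Gen (P : (Fin 12 → ℂ) → Prop) : Prop :=
  ∃ p : MvPolynomial (Fin 12) ℂ, MvPolynomial.eval base p ≠ 0 ∧
    ∀ t, MvPolynomial.eval t p ≠ 0 → P t

theorem Gen.and {P R : (Fin 12 → ℂ) → Prop} (h : Gen P) (k : Gen R) :
    Gen (fun t => P t ∧ R t) := by
  obtain ⟨p, hp, hP⟩ := h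
  obtain ⟨r, hr, hR⟩ := k
  refine ⟨p * r, by simp [hp, hr], fun t ht => ?_⟩
  rw [map_mul] at ht
  exact ⟨hP t (left_ne_zero_of_mul ht), hR t (right_ne_zero_of_mul ht)⟩

/-- `f` is a rational function, regular at the base point with value `c` there. -/
def G (f : Fn) (c : ℂ) : Prop :=
  ∃ n d : MvPolynomial (Fin 12) ℂ, MvPolynomial.eval base d ≠ 0 ∧
    MvPolynomial.eval base n = c * MvPolynomial.eval base d ∧
    ∀ t, MvPolynomial.eval t d ≠ 0 → f t * MvPolynomial.eval t d = MvPolynomial.eval t n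

theorem G.coord (i : Fin 12) : G (fun t => t i) (base i) :=
  ⟨MvPolynomial.X i, 1, by simp, by simp, by simp⟩

theorem G.mul {f g : Fn} {c k : ℂ} (hf : G f c) (hg : G g k) :
    G (fun t => f t * g t) (c * k) := by
  obtain ⟨n, d, h1, h2, h3⟩ := hf
  obtain ⟨m, e, k1, k2, k3⟩ := hg
  refine ⟨n * m, d * e, by simp [h1, k1], by simp only [map_mul, h2, k2]; ring, fun t ht => ?_⟩
  rw [map_mul] at ht
  simp only [map_mul, ← h3 t (left_ne_zero_of_mul ht), ← k3 t (right_ne_zero_of_mul ht)]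
  ring

theorem G.sub {f g : Fn} {c k : ℂ} (hf : G f c) (hg : G g k) :
    G (fun t => f t - g t) (c - k) := by
  obtain ⟨n, d, h1, h2, h3⟩ := hf
  obtain ⟨m, e, k1, k2, k3⟩ := hg
  refine ⟨n * e - m * d, d * e, by simp [h1, k1],
    by simp only [map_mul, map_sub, h2, k2]; ring, fun t ht => ?_⟩
  rw [map_mul] at ht
  simp only [map_mul, map_sub, ← h3 t (left_ne_zero_of_mul ht),
    ← k3 t (right_ne_zero_of_mul ht)]
  ring

theorem G.div {f g : Fn} {c k r : ℂ} (hf : G f c) (hg : G g k) (hk : k ≠ 0) (hr : c = r * k) :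
    G (fun t => f t / g t) r := by
  obtain ⟨n, d, h1, h2, h3⟩ := hf
  obtain ⟨m, e, k1, k2, k3⟩ := hg
  refine ⟨n * e * e, d * m * e, by simp [h1, k1, k2, hk],
    by simp only [map_mul, h2, k2, hr]; ring, fun t ht => ?_⟩
  rw [map_mul, map_mul] at ht
  have he := right_ne_zero_of_mul ht
  have hm := right_ne_zero_of_mul (left_ne_zero_of_mul ht)
  have hd := left_ne_zero_of_mul (left_ne_zero_of_mul ht)
  have hg : g t ≠ 0 := by
    intro h0
    apply hm
    rw [← k3 t he, h0, zero_mul]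
  simp only [map_mul, ← h3 t hd, ← k3 t he]
  field_simp

theorem G.gen {f : Fn} {c : ℂ} (hf : G f c) (hc : c ≠ 0) : Gen (fun t => f t ≠ 0) := by
  obtain ⟨n, d, h1, h2, h3⟩ := hf
  refine ⟨n * d, by simp [h1, h2, hc], fun t ht h0 => ?_⟩
  rw [map_mul] at ht
  have := h3 t (right_ne_zero_of_mul ht)
  rw [h0, zero_mul] at this
  exact left_ne_zero_of_mul ht this.symm

/-- Solve the quad equation for the vertex opposite to `e`. -/
def stp (e u v p q : ℂ) : ℂ := e * (q * u - p * v) / (p * u - q * v)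

/-- Solve the quad equation for the vertex next to `e`. -/
def sd (e w u p q : ℂ) : ℂ := (q * e - p * w) * u / (p * e - q * w)

theorem Q_stp {e u v p q : ℂ} (h : p * u - q * v ≠ 0) : Q e u v (stp e u v p q) p q := by
  unfold Q stp
  rw [div_mul_cancel₀ _ h]

theorem Q_sd {e w u p q : ℂ} (h : p * e - q * w ≠ 0) : Q e u (sd e w u p q) w p q := by
  have : sd e w u p q * (p * e - q * w) = (q * e - p * w) * u := div_mul_cancel₀ _ h
  unfold Q
  linear_combination -this

theorem G.stp {e u v p q : Fn} {ce cu cv cp cq c : ℂ} (he : G e ce) (hu : G u cu) (hv : G v cv)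
    (hp : G p cp) (hq : G q cq) (h0 : cp * cu - cq * cv ≠ 0)
    (hc : ce * (cq * cu - cp * cv) = c * (cp * cu - cq * cv)) :
    G (fun t => _root_.stp (e t) (u t) (v t) (p t) (q t)) c :=
  (he.mul ((hq.mul hu).sub (hp.mul hv))).div ((hp.mul hu).sub (hq.mul hv)) h0 hc

theorem G.sd {e w u p q : Fn} {ce cw cu cp cq c : ℂ} (he : G e ce) (hw : G w cw) (hu : G u cu)
    (hp : G p cp) (hq : G q cq) (h0 : cp * ce - cq * cw ≠ 0)
    (hc : (cq * ce - cp * cw) * cu = c * (cp * ce - cq * cw)) :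
    G (fun t => _root_.sd (e t) (w t) (u t) (p t) (q t)) c :=
  (((hq.mul he).sub (hp.mul hw)).mul hu).div ((hp.mul he).sub (hq.mul hw)) h0 hc


def f_a1 : Fn := fun t => t 0
def f_a2 : Fn := fun t => t 1
def f_b1 : Fn := fun t => t 2
def f_b2 : Fn := fun t => t 3
def f_g1 : Fn := fun t => t 4
def f_g2 : Fn := fun t => t 5
def f_x : Fn := fun t => t 6
def f_xa : Fn := fun t => t 7
def f_xb : Fn := fun t => t 8
def f_xc : Fn := fun t => t 9
def f_zn : Fn := fun t => t 10
def f_zw : Fn := fun t => t 11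
def f_vb : Fn := fun t => sd (f_xa t) (f_x t) (f_xc t) (f_a2 t) (f_b1 t)
def f_vh : Fn := fun t => sd (f_xa t) (f_zw t) (f_xc t) (f_a2 t) (f_g2 t)
def f_vg : Fn := fun t => sd (f_xa t) (f_zn t) (f_vb t) (f_b1 t) (f_g1 t)
def f_vag : Fn := fun t => stp (f_xa t) (f_xc t) (f_vg t) (f_a2 t) (f_g1 t)
def f_vbh : Fn := fun t => stp (f_xa t) (f_vb t) (f_vh t) (f_b1 t) (f_g2 t)
def f_vgh : Fn := fun t => stp (f_xa t) (f_vg t) (f_vh t) (f_g1 t) (f_g2 t)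
def f_vabg : Fn := fun t => stp (f_vb t) (f_x t) (f_zn t) (f_a2 t) (f_g1 t)
def f_vagh : Fn := fun t => stp (f_xc t) (f_vag t) (f_zw t) (f_g1 t) (f_g2 t)
def f_vbgh : Fn := fun t => stp (f_vb t) (f_zn t) (f_vbh t) (f_g1 t) (f_g2 t)
def f_vabh : Fn := fun t => stp (f_vb t) (f_x t) (f_vbh t) (f_a2 t) (f_g2 t)
def f_vabd : Fn := fun t => stp (f_vb t) (f_x t) (f_xb t) (f_a2 t) (f_b2 t)
def f_vbdg : Fn := fun t => stp (f_vb t) (f_xb t) (f_zn t) (f_b2 t) (f_g1 t)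
def f_vbdh : Fn := fun t => stp (f_vb t) (f_xb t) (f_vbh t) (f_b2 t) (f_g2 t)
def f_vabgh : Fn := fun t => stp (f_zn t) (f_vabg t) (f_vbgh t) (f_a2 t) (f_g2 t)
def f_vbdgh : Fn := fun t => stp (f_zn t) (f_vbdg t) (f_vbgh t) (f_b2 t) (f_g2 t)
def f_vabdh : Fn := fun t => stp (f_xb t) (f_vabd t) (f_vbdh t) (f_a2 t) (f_g2 t)
def f_vabdg : Fn := fun t => stp (f_zn t) (f_vabg t) (f_vbdg t) (f_a2 t) (f_b2 t)
def f_vabdgh : Fn := fun t => stp (f_vbgh t) (f_vabgh t) (f_vbdgh t) (f_a2 t) (f_b2 t)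

theorem g_a1 : G f_a1 (1) := by
  have h := G.coord 0
  simp only [base] at h
  exact h

theorem g_a2 : G f_a2 (-1) := by
  have h := G.coord 1
  simp only [base] at h
  exact h

theorem g_b1 : G f_b1 (5) := by
  have h := G.coord 2
  simp only [base] at h
  exact h

theorem g_b2 : G f_b2 (3) := by
  have h := G.coord 3
  simp only [base] at h
  exact h

theorem g_g1 : G f_g1 (4) := by
  have h := G.coord 4
  simp only [base] at h
  exact h

theorem g_g2 : G f_g2 (-2) := by
  have h := G.coord 5
  simp only [base] at h
  exact h

theorem g_x : G f_x (2) := by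
  have h := G.coord 6
  simp only [base] at h
  exact h

theorem g_xa : G f_xa (2) := by
  have h := G.coord 7
  simp only [base] at h
  exact h

theorem g_xb : G f_xb (2) := by
  have h := G.coord 8
  simp only [base] at h
  exact h

theorem g_xc : G f_xc (1) := by
  have h := G.coord 9
  simp only [base] at h
  exact h

theorem g_zn : G f_zn (-2) := by
  have h := G.coord 10
  simp only [base] at h
  exact h

theorem g_zw : G f_zw (-2) := by
  have h := G.coord 11
  simp only [base] at h
  exact h

theorem g_vb : G f_vb (-1) := G.sd g_xa g_x g_xc g_a2 g_b1 (by norm_num) (by norm_num)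

theorem g_vh : G f_vh (1) := G.sd g_xa g_zw g_xc g_a2 g_g2 (by norm_num) (by norm_num)

theorem g_vg : G f_vg (-1) := G.sd g_xa g_zn g_vb g_b1 g_g1 (by norm_num) (by norm_num)

theorem g_vag : G f_vag (2) := G.stp g_xa g_xc g_vg g_a2 g_g1 (by norm_num) (by norm_num)

theorem g_vbh : G f_vbh (2) := G.stp g_xa g_vb g_vh g_b1 g_g2 (by norm_num) (by norm_num)

theorem g_vgh : G f_vgh (2) := G.stp g_xa g_vg g_vh g_g1 g_g2 (by norm_num) (by norm_num)

theorem g_vabg : G f_vabg (-1) := G.stp g_vb g_x g_zn g_a2 g_g1 (by norm_num) (by norm_num)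

theorem g_vagh : G f_vagh (1) := G.stp g_xc g_vag g_zw g_g1 g_g2 (by norm_num) (by norm_num)

theorem g_vbgh : G f_vbgh (-1) := G.stp g_vb g_zn g_vbh g_g1 g_g2 (by norm_num) (by norm_num)

theorem g_vabh : G f_vabh (1) := G.stp g_vb g_x g_vbh g_a2 g_g2 (by norm_num) (by norm_num)

theorem g_vabd : G f_vabd (1) := G.stp g_vb g_x g_xb g_a2 g_b2 (by norm_num) (by norm_num)

theorem g_vbdg : G f_vbdg (-1) := G.stp g_vb g_xb g_zn g_b2 g_g1 (by norm_num) (by norm_num)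

theorem g_vbdh : G f_vbdh (1) := G.stp g_vb g_xb g_vbh g_b2 g_g2 (by norm_num) (by norm_num)

theorem g_vabgh : G f_vabgh (2) := G.stp g_zn g_vabg g_vbgh g_a2 g_g2 (by norm_num) (by norm_num)

theorem g_vbdgh : G f_vbdgh (2) := G.stp g_zn g_vbdg g_vbgh g_b2 g_g2 (by norm_num) (by norm_num)

theorem g_vabdh : G f_vabdh (-2) := G.stp g_xb g_vabd g_vbdh g_a2 g_g2 (by norm_num) (by norm_num)

theorem g_vabdg : G f_vabdg (2) := G.stp g_zn g_vabg g_vbdg g_a2 g_b2 (by norm_num) (by norm_num)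

theorem g_vabdgh : G f_vabdgh (1) := G.stp g_vbgh g_vabgh g_vbdgh g_a2 g_b2 (by norm_num) (by norm_num)

theorem statement10 :
    ∃ p : MvPolynomial (Fin 12) ℂ, p ≠ 0 ∧
    ∀ a1 a2 b1 b2 g1 g2 x xa xb xc zn zw : ℂ,
      a1 ≠ 0 → a2 ≠ 0 → b1 ≠ 0 → b2 ≠ 0 → g1 ≠ 0 → g2 ≠ 0 →
      MvPolynomial.eval (![a1, a2, b1, b2, g1, g2, x, xa, xb, xc, zn, zw]) p ≠ 0 →
      ∃ xd y ya yb yc yd ze zs : ℂ,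
        C3 0 0 0 x xa xb xc xd a1 a2 b1 b2 = 0 ∧
        C3 0 0 0 zw ya xa yc xc a1 a2 g1 g2 = 0 ∧
        A3 0 zn ya yb xa xb g1 g2 b1 b2 = 0 ∧
        C3 0 0 0 y ya yb yc yd a1 a2 b1 b2 = 0 ∧
        C3 0 0 0 ze yb xb yd xd a1 a2 g1 g2 = 0 ∧
        A3 0 zs yc yd xc xd g1 g2 b1 b2 = 0 ∧
        A3 0 xa zw ya x zn b1 g2 a2 g1 = 0 ∧
        A3 0 xb ze yb x zn b2 g2 a2 g1 = 0 ∧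
        C3 0 0 0 xc zs yc x zw a1 g1 b1 g2 = 0 ∧
        C3 0 0 0 xd yd zs ze x a1 g1 g2 b2 = 0 ∧
        A3 0 ya zw xa y zn b1 g1 a2 g2 = 0 ∧
        A3 0 yb ze xb y zn b2 g1 a2 g2 = 0 ∧
        C3 0 0 0 yc xc zs zw y a1 g2 g1 b1 = 0 ∧
        C3 0 0 0 yd xd zs ze y a1 g2 g1 b2 = 0 := by
  have m_b : Gen (fun t => f_a2 t * f_xa t - f_b1 t * f_x t ≠ 0) := ((((g_a2.mul g_xa).sub (g_b1.mul g_x)).gen (by norm_num)))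
  have m_h : Gen (fun t => f_a2 t * f_xa t - f_g2 t * f_zw t ≠ 0) := ((((g_a2.mul g_xa).sub (g_g2.mul g_zw)).gen (by norm_num)))
  have m_g : Gen (fun t => f_b1 t * f_xa t - f_g1 t * f_zn t ≠ 0) := ((((g_b1.mul g_xa).sub (g_g1.mul g_zn)).gen (by norm_num)))
  have n__ab : Gen (fun t => f_a2 t * f_xc t - f_b1 t * f_vb t ≠ 0) := ((((g_a2.mul g_xc).sub (g_b1.mul g_vb)).gen (by norm_num)))
  have n__ag : Gen (fun t => f_a2 t * f_xc t - f_g1 t * f_vg t ≠ 0) := ((((g_a2.mul g_xc).sub (g_g1.mul g_vg)).gen (by norm_num)))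
  have n__ah : Gen (fun t => f_a2 t * f_xc t - f_g2 t * f_vh t ≠ 0) := ((((g_a2.mul g_xc).sub (g_g2.mul g_vh)).gen (by norm_num)))
  have n__bg : Gen (fun t => f_b1 t * f_vb t - f_g1 t * f_vg t ≠ 0) := ((((g_b1.mul g_vb).sub (g_g1.mul g_vg)).gen (by norm_num)))
  have n__bh : Gen (fun t => f_b1 t * f_vb t - f_g2 t * f_vh t ≠ 0) := ((((g_b1.mul g_vb).sub (g_g2.mul g_vh)).gen (by norm_num)))
  have n__gh : Gen (fun t => f_g1 t * f_vg t - f_g2 t * f_vh t ≠ 0) := ((((g_g1.mul g_vg).sub (g_g2.mul g_vh)).gen (by norm_num)))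
  have n_a_gh : Gen (fun t => f_g1 t * f_vag t - f_g2 t * f_zw t ≠ 0) := ((((g_g1.mul g_vag).sub (g_g2.mul g_zw)).gen (by norm_num)))
  have n_b_ad : Gen (fun t => f_a2 t * f_x t - f_b2 t * f_xb t ≠ 0) := ((((g_a2.mul g_x).sub (g_b2.mul g_xb)).gen (by norm_num)))
  have n_b_ag : Gen (fun t => f_a2 t * f_x t - f_g1 t * f_zn t ≠ 0) := ((((g_a2.mul g_x).sub (g_g1.mul g_zn)).gen (by norm_num)))
  have n_b_ah : Gen (fun t => f_a2 t * f_x t - f_g2 t * f_vbh t ≠ 0) := ((((g_a2.mul g_x).sub (g_g2.mul g_vbh)).gen (by norm_num)))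
  have n_b_dg : Gen (fun t => f_b2 t * f_xb t - f_g1 t * f_zn t ≠ 0) := ((((g_b2.mul g_xb).sub (g_g1.mul g_zn)).gen (by norm_num)))
  have n_b_dh : Gen (fun t => f_b2 t * f_xb t - f_g2 t * f_vbh t ≠ 0) := ((((g_b2.mul g_xb).sub (g_g2.mul g_vbh)).gen (by norm_num)))
  have n_b_gh : Gen (fun t => f_g1 t * f_zn t - f_g2 t * f_vbh t ≠ 0) := ((((g_g1.mul g_zn).sub (g_g2.mul g_vbh)).gen (by norm_num)))
  have n_g_ab : Gen (fun t => f_a2 t * f_vag t - f_b1 t * f_zn t ≠ 0) := ((((g_a2.mul g_vag).sub (g_b1.mul g_zn)).gen (by norm_num)))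
  have n_g_ah : Gen (fun t => f_a2 t * f_vag t - f_g2 t * f_vgh t ≠ 0) := ((((g_a2.mul g_vag).sub (g_g2.mul g_vgh)).gen (by norm_num)))
  have n_g_bh : Gen (fun t => f_b1 t * f_zn t - f_g2 t * f_vgh t ≠ 0) := ((((g_b1.mul g_zn).sub (g_g2.mul g_vgh)).gen (by norm_num)))
  have n_bd_ag : Gen (fun t => f_a2 t * f_vabd t - f_g1 t * f_vbdg t ≠ 0) := ((((g_a2.mul g_vabd).sub (g_g1.mul g_vbdg)).gen (by norm_num)))
  have n_bd_ah : Gen (fun t => f_a2 t * f_vabd t - f_g2 t * f_vbdh t ≠ 0) := ((((g_a2.mul g_vabd).sub (g_g2.mul g_vbdh)).gen (by norm_num)))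
  have n_bd_gh : Gen (fun t => f_g1 t * f_vbdg t - f_g2 t * f_vbdh t ≠ 0) := ((((g_g1.mul g_vbdg).sub (g_g2.mul g_vbdh)).gen (by norm_num)))
  have n_bg_ad : Gen (fun t => f_a2 t * f_vabg t - f_b2 t * f_vbdg t ≠ 0) := ((((g_a2.mul g_vabg).sub (g_b2.mul g_vbdg)).gen (by norm_num)))
  have n_bg_ah : Gen (fun t => f_a2 t * f_vabg t - f_g2 t * f_vbgh t ≠ 0) := ((((g_a2.mul g_vabg).sub (g_g2.mul g_vbgh)).gen (by norm_num)))
  have n_bg_dh : Gen (fun t => f_b2 t * f_vbdg t - f_g2 t * f_vbgh t ≠ 0) := ((((g_b2.mul g_vbdg).sub (g_g2.mul g_vbgh)).gen (by norm_num)))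
  have n_bdg_ah : Gen (fun t => f_a2 t * f_vabdg t - f_g2 t * f_vbdgh t ≠ 0) := ((((g_a2.mul g_vabdg).sub (g_g2.mul g_vbdgh)).gen (by norm_num)))
  have n_bgh_ad : Gen (fun t => f_a2 t * f_vabgh t - f_b2 t * f_vbdgh t ≠ 0) := ((((g_a2.mul g_vabgh).sub (g_b2.mul g_vbdgh)).gen (by norm_num)))
  have z_ : Gen (fun t => f_xa t ≠ 0) := (g_xa.gen (by norm_num))
  have z_a : Gen (fun t => f_xc t ≠ 0) := (g_xc.gen (by norm_num))
  have z_b : Gen (fun t => f_vb t ≠ 0) := (g_vb.gen (by norm_num))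
  have z_g : Gen (fun t => f_vg t ≠ 0) := (g_vg.gen (by norm_num))
  have z_h : Gen (fun t => f_vh t ≠ 0) := (g_vh.gen (by norm_num))
  have z_ab : Gen (fun t => f_x t ≠ 0) := (g_x.gen (by norm_num))
  have z_ag : Gen (fun t => f_vag t ≠ 0) := (g_vag.gen (by norm_num))
  have z_bd : Gen (fun t => f_xb t ≠ 0) := (g_xb.gen (by norm_num))
  have z_bg : Gen (fun t => f_zn t ≠ 0) := (g_zn.gen (by norm_num))
  have z_gh : Gen (fun t => f_vgh t ≠ 0) := (g_vgh.gen (by norm_num))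
  have z_abd : Gen (fun t => f_vabd t ≠ 0) := (g_vabd.gen (by norm_num))
  have z_abg : Gen (fun t => f_vabg t ≠ 0) := (g_vabg.gen (by norm_num))
  have z_agh : Gen (fun t => f_vagh t ≠ 0) := (g_vagh.gen (by norm_num))
  have z_bdg : Gen (fun t => f_vbdg t ≠ 0) := (g_vbdg.gen (by norm_num))
  have z_bdh : Gen (fun t => f_vbdh t ≠ 0) := (g_vbdh.gen (by norm_num))
  have z_bgh : Gen (fun t => f_vbgh t ≠ 0) := (g_vbgh.gen (by norm_num))
  have z_abdg : Gen (fun t => f_vabdg t ≠ 0) := (g_vabdg.gen (by norm_num))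
  have z_abgh : Gen (fun t => f_vabgh t ≠ 0) := (g_vabgh.gen (by norm_num))
  have z_bdgh : Gen (fun t => f_vbdgh t ≠ 0) := (g_vbdgh.gen (by norm_num))
  have z_abdgh : Gen (fun t => f_vabdgh t ≠ 0) := (g_vabdgh.gen (by norm_num))
  obtain ⟨p, hp, hP⟩ :=
    m_b.and <|
    m_h.and <|
    m_g.and <|
    n__ab.and <|
    n__ag.and <|
    n__ah.and <|
    n__bg.and <|
    n__bh.and <|
    n__gh.and <|
    n_a_gh.and <|
    n_b_ad.and <|
    n_b_ag.and <|
    n_b_ah.and <|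
    n_b_dg.and <|
    n_b_dh.and <|
    n_b_gh.and <|
    n_g_ab.and <|
    n_g_ah.and <|
    n_g_bh.and <|
    n_bd_ag.and <|
    n_bd_ah.and <|
    n_bd_gh.and <|
    n_bg_ad.and <|
    n_bg_ah.and <|
    n_bg_dh.and <|
    n_bdg_ah.and <|
    n_bgh_ad.and <|
    z_.and <|
    z_a.and <|
    z_b.and <|
    z_g.and <|
    z_h.and <|
    z_ab.and <|
    z_ag.and <|
    z_bd.and <|
    z_bg.and <|
    z_gh.and <|
    z_abd.and <|
    z_abg.and <|
    z_agh.and <|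
    z_bdg.and <|
    z_bdh.and <|
    z_bgh.and <|
    z_abdg.and <|
    z_abgh.and <|
    z_bdgh.and <|
    z_abdgh
  refine ⟨p, fun h0 => hp (by simp [h0]), ?_⟩
  intro a1 a2 b1 b2 g1 g2 x xa xb xc zn zw _ ha2 hb1 hb2 hg1 hg2 hne
  obtain ⟨m_b, m_h, m_g, n__ab, n__ag, n__ah, n__bg, n__bh, n__gh, n_a_gh, n_b_ad, n_b_ag, n_b_ah, n_b_dg, n_b_dh, n_b_gh, n_g_ab, n_g_ah, n_g_bh, n_bd_ag, n_bd_ah, n_bd_gh, n_bg_ad, n_bg_ah, n_bg_dh, n_bdg_ah, n_bgh_ad, z_, z_a, z_b, z_g, z_h, z_ab, z_ag, z_bd, z_bg, z_gh, z_abd, z_abg, z_agh, z_bdg, z_bdh, z_bgh, z_abdg, z_abgh, z_bdgh, z_abdgh⟩ := hP _ hne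
  have key := core (a1 := a1) (a2 := a2) (b1 := b1) (b2 := b2) (g1 := g1) (g2 := g2)
    (x := x) (xa := xa) (xb := xb) (xc := xc) (zn := zn) (zw := zw) ha2 hb1 hb2 hg1 hg2
    (Q_sd m_b)
    (Q_sd m_h)
    (Q_sd m_g)
    (Q_stp n__ag)
    (Q_stp n__bh)
    (Q_stp n__gh)
    (Q_stp n_b_ag)
    (Q_stp n_a_gh)
    (Q_stp n_b_gh)
    (Q_stp n_b_ah)
    (Q_stp n_b_ad)
    (Q_stp n_b_dg)
    (Q_stp n_b_dh)
    (Q_stp n_bg_ah)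
    (Q_stp n_bg_dh)
    (Q_stp n_bd_ah)
    (Q_stp n_bg_ad)
    (Q_stp n_bgh_ad)
    n__ab n__ag n__ah n__bg n__bh n__gh n_a_gh n_b_ad n_b_ag n_b_ah n_b_dg n_b_dh n_b_gh n_g_ab n_g_ah n_g_bh n_bd_ag n_bd_ah n_bd_gh n_bg_ad n_bg_ah n_bg_dh n_bdg_ah n_bgh_ad
    z_ z_a z_b z_g z_h z_ab z_ag z_bd z_bg z_gh z_abd z_abg z_agh z_bdg z_bdh z_bgh z_abdg z_abgh z_bdgh z_abdgh
  exact ⟨_, _, _, _, _, _, _, _, key⟩
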